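/- Let 0 ≤ α ≤ 1/2 and let f ∈ 𝒜 be starlike of order α, with Ω = f(𝔻). Let g be analytic on 𝔻 with g(0) = 0 and g ≺ f, and write g(z) = Σ_{k=1}^∞ b_k z^k. Let r₀ be the unique root in (0, 1) of the equation (1 − r)^{2(1−α)} = 2^{2(1−α)} r. Then for every r with 0 ≤ r ≤ r₀, Σ_{k=1}^∞ |b_k| r^k ≤ dist(0, ∂Ω), the Euclidean distance from f(0) = 0 to the boundary of Ω. (In particular, for α = 0 the Bohr radius for starlike functions is r₀ = 3 − 2√2.) -/

import Mathlib

open Complex Metric Set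

noncomputable section

/-- The open unit disk in `ℂ`. -/
def 𝔻 : Set ℂ := Metric.ball 0 1

/-- The class `𝒜` of analytic functions on `𝔻` normalized by `f 0 = 0`, `f' 0 = 1`. -/
def IsClassA (f : ℂ → ℂ) : Prop :=
  DifferentiableOn ℂ f 𝔻 ∧ f 0 = 0 ∧ deriv f 0 = 1

/-- `g` is subordinate to `F` on the unit disk. -/
def Subordinate (g F : ℂ → ℂ) : Prop :=
  ∃ ω : ℂ → ℂ, DifferentiableOn ℂ ω 𝔻 ∧ ω 0 = 0 ∧ (∀ z ∈ 𝔻, ω z ∈ 𝔻) ∧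
    ∀ z ∈ 𝔻, g z = F (ω z)

/-- `ψ` is a Ma-Minda function: analytic and univalent on `𝔻`, `Re ψ > 0`, `ψ 0 = 1`,
`ψ' 0 > 0`, with real Taylor coefficients (expressed via `ψ (conj z) = conj (ψ z)`). -/
def MaMinda (ψ : ℂ → ℂ) : Prop :=
  DifferentiableOn ℂ ψ 𝔻 ∧ Set.InjOn ψ 𝔻 ∧ (∀ z ∈ 𝔻, 0 < (ψ z).re) ∧
    ψ 0 = 1 ∧ 0 < (deriv ψ 0).re ∧ (deriv ψ 0).im = 0 ∧
    (∀ z ∈ 𝔻, ψ (starRingEnd ℂ z) = starRingEnd ℂ (ψ z))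

/-- The Ma-Minda starlike class `S*(ψ)`. -/
def StarlikeMM (ψ f : ℂ → ℂ) : Prop :=
  IsClassA f ∧ (∀ z ∈ 𝔻, z ≠ 0 → f z ≠ 0) ∧
    Subordinate (fun z => if z = 0 then 1 else z * deriv f z / f z) ψ

/-- The Ma-Minda convex class `C(ψ)`. -/
def ConvexMM (ψ f : ℂ → ℂ) : Prop :=
  IsClassA f ∧ (∀ z ∈ 𝔻, deriv f z ≠ 0) ∧
    Subordinate (fun z => 1 + z * deriv (deriv f) z / deriv f z) ψ

/-- `f` is starlike of order `α`. -/
def StarlikeOrder (α : ℝ) (f : ℂ → ℂ) : Prop :=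
  IsClassA f ∧ (∀ z ∈ 𝔻, z ≠ 0 → f z ≠ 0) ∧
    ∀ z ∈ 𝔻, z ≠ 0 → α < (z * deriv f z / f z).re

/-- `f` is a (normalized) convex function on `𝔻`. -/
def IsConvexFn (f : ℂ → ℂ) : Prop :=
  IsClassA f ∧ (∀ z ∈ 𝔻, deriv f z ≠ 0) ∧
    ∀ z ∈ 𝔻, 0 < (1 + z * deriv (deriv f) z / deriv f z).re

section
theorem HasSum.congr_fun' {f g : ℕ → ℂ} {a : ℂ} (h : HasSum f a) (e : ∀ n, g n = f n) :
    HasSum g a := by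
  have : g = f := funext e
  rwa [this]

theorem ps_uniq {φ : ℂ → ℂ} {a b : ℕ → ℂ} {r : ℝ} (hr : 0 < r)
    (ha : ∀ z : ℂ, ‖z‖ < r → HasSum (fun k => a k * z ^ k) (φ z))
    (hb : ∀ z : ℂ, ‖z‖ < r → HasSum (fun k => b k * z ^ k) (φ z)) : a = b := by
  have key : ∀ a : ℕ → ℂ, (∀ z : ℂ, ‖z‖ < r → HasSum (fun k => a k * z ^ k) (φ z)) →
      HasFPowerSeriesAt φ (FormalMultilinearSeries.ofScalars ℂ a) 0 := by
    intro a ha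
    rw [hasFPowerSeriesAt_iff]
    filter_upwards [Metric.ball_mem_nhds (0:ℂ) hr] with z hz
    have := ha z (by simpa using hz)
    simpa [FormalMultilinearSeries.coeff_ofScalars, mul_comm] using this
  have h := (key a ha).eq_formalMultilinearSeries (key b hb)
  funext n
  have := congrArg (fun p => FormalMultilinearSeries.coeff p n) h
  simpa [FormalMultilinearSeries.coeff_ofScalars] using this

def Maj (φ : ℂ → ℂ) (r B : ℝ) : Prop :=
  ∃ c : ℕ → ℂ, Summable (fun k => ‖c k‖ * r ^ k) ∧ ∑' k, ‖c k‖ * r ^ k ≤ B ∧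
    ∀ z : ℂ, ‖z‖ ≤ r → HasSum (fun k => c k * z ^ k) (φ z)

theorem Maj.norm_le {φ : ℂ → ℂ} {r B : ℝ} (h : Maj φ r B) {z : ℂ} (hz : ‖z‖ ≤ r) : ‖φ z‖ ≤ B := by
  obtain ⟨c, hs, hB, hc⟩ := h
  refine le_trans ?_ hB
  rw [← (hc z hz).tsum_eq]
  refine tsum_of_norm_bounded hs.hasSum ?_
  intro k
  rw [norm_mul, norm_pow]
  gcongr

theorem Maj.one {r : ℝ} : Maj (fun _ => 1) r 1 := by
  refine ⟨fun k => if k = 0 then 1 else 0, ?_, ?_, ?_⟩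
  · apply summable_of_ne_finset_zero (s := {0})
    intro k hk; simp at hk; simp [hk]
  · rw [tsum_eq_single 0]
    · simp
    · intro k hk; simp [hk]
  · intro z hz
    convert hasSum_single (f := fun k : ℕ => (if k = 0 then (1:ℂ) else 0) * z ^ k) 0 ?_ using 1
    · simp
    · intro k hk; simp [hk]

theorem Maj.id {r : ℝ} : Maj (fun z => z) r r := by
  refine ⟨fun k => if k = 1 then 1 else 0, ?_, ?_, ?_⟩
  · apply summable_of_ne_finset_zero (s := {1})
    intro k hk; simp at hk; simp [hk]
  · rw [tsum_eq_single 1]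
    · simp
    · intro k hk; simp [hk]
  · intro z hz
    convert hasSum_single (f := fun k : ℕ => (if k = 1 then (1:ℂ) else 0) * z ^ k) 1 ?_ using 1
    · simp
    · intro k hk; simp [hk]

theorem Maj.mul {φ ψ : ℂ → ℂ} {r A B : ℝ} (hr : 0 ≤ r) (h : Maj φ r A) (h' : Maj ψ r B) :
    Maj (fun z => φ z * ψ z) r (A * B) := by
  obtain ⟨c, hs, hB, hc⟩ := h
  obtain ⟨d, ht, hD, hd⟩ := h'
  have hs' : Summable (fun k => ‖‖c k‖ * r ^ k‖) := hs.norm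
  have ht' : Summable (fun k => ‖‖d k‖ * r ^ k‖) := ht.norm
  have hcs := hasSum_sum_range_mul_of_summable_norm hs' ht'
  have hle : ∀ n, ‖∑ k ∈ Finset.range (n+1), c k * d (n - k)‖ * r ^ n ≤
      ∑ k ∈ Finset.range (n+1), (‖c k‖ * r ^ k) * (‖d (n-k)‖ * r ^ (n - k)) := by
    intro n
    calc _ ≤ (∑ k ∈ Finset.range (n+1), ‖c k * d (n - k)‖) * r ^ n := by
          gcongr; exact norm_sum_le _ _
      _ = _ := by
          rw [Finset.sum_mul]
          refine Finset.sum_congr rfl fun k hk => ?_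
          have : k ≤ n := by simp at hk; omega
          rw [norm_mul]
          conv_lhs => rw [← Nat.add_sub_cancel' this, pow_add]
          simp only [Nat.add_sub_cancel' this]
          ring
  have hsum := Summable.of_nonneg_of_le (fun n => by positivity) hle hcs.summable
  refine ⟨fun n => ∑ k ∈ Finset.range (n+1), c k * d (n - k), hsum, ?_, ?_⟩
  · refine (hsum.tsum_le_tsum hle hcs.summable).trans ?_
    rw [hcs.tsum_eq]
    have h1 : 0 ≤ ∑' k, ‖c k‖ * r ^ k := tsum_nonneg fun k => by positivity
    have h2 : 0 ≤ ∑' k, ‖d k‖ * r ^ k := tsum_nonneg fun k => by positivity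
    exact mul_le_mul hB hD h2 (h1.trans hB)
  · intro z hz
    have n1 : Summable (fun k => ‖c k * z ^ k‖) := by
      refine Summable.of_nonneg_of_le (fun n => by positivity) (fun k => ?_) hs
      rw [norm_mul, norm_pow]; gcongr
    have n2 : Summable (fun k => ‖d k * z ^ k‖) := by
      refine Summable.of_nonneg_of_le (fun n => by positivity) (fun k => ?_) ht
      rw [norm_mul, norm_pow]; gcongr
    have := hasSum_sum_range_mul_of_summable_norm n1 n2
    rw [(hc z hz).tsum_eq, (hd z hz).tsum_eq] at this
    refine this.congr_fun' ?_
    intro n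
    rw [Finset.sum_mul]
    refine Finset.sum_congr rfl fun k hk => ?_
    have : k ≤ n := by simp at hk; omega
    conv_lhs => rw [← Nat.add_sub_cancel' this, pow_add]
    simp only [Nat.add_sub_cancel' this]
    ring

theorem Maj.pow {φ : ℂ → ℂ} {r B : ℝ} (hr : 0 ≤ r) (h : Maj φ r B) (n : ℕ) :
    Maj (fun z => φ z ^ n) r (B ^ n) := by
  induction n with
  | zero => simpa using Maj.one
  | succ n ih => simpa [pow_succ] using ih.mul hr h

theorem Maj.mono {φ : ℂ → ℂ} {r A B : ℝ} (h : Maj φ r A) (hAB : A ≤ B) : Maj φ r B := by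
  obtain ⟨c, hs, hB, hc⟩ := h
  exact ⟨c, hs, hB.trans hAB, hc⟩

set_option maxHeartbeats 1000000 in
theorem Maj.comp {φ F : ℂ → ℂ} {r B : ℝ} (hr : 0 ≤ r) (h : Maj φ r B) (a : ℕ → ℂ)
    (ha : Summable fun n => ‖a n‖ * B ^ n)
    (hF : ∀ w : ℂ, ‖w‖ ≤ B → HasSum (fun n => a n * w ^ n) (F w)) :
    Maj (fun z => F (φ z)) r (∑' n, ‖a n‖ * B ^ n) := by
  choose c hs hB hc using fun n => h.pow hr n
  let u : ℕ × ℕ → ℝ := fun p => ‖a p.1‖ * (‖c p.1 p.2‖ * r ^ p.2)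
  have hu0 : ∀ p, 0 ≤ u p := fun p => by positivity
  have hfib : ∀ n, Summable fun k => u (n, k) := fun n => (hs n).mul_left ‖a n‖
  have hfibt : ∀ n, ∑' k, u (n, k) ≤ ‖a n‖ * B ^ n := fun n => by
    simp only [u, tsum_mul_left]
    gcongr
    exact hB n
  have hu : Summable u := by
    rw [summable_prod_of_nonneg hu0]
    exact ⟨hfib, Summable.of_nonneg_of_le (fun n => tsum_nonneg fun k => hu0 _) hfibt ha⟩
  have hus : Summable fun p : ℕ × ℕ => u p.swap := (Equiv.prodComm ℕ ℕ).summable_iff.2 hu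
  have husk : ∀ k, Summable fun n => u (n, k) := fun k => hus.prod_factor k
  have hust : HasSum (fun k => ∑' n, u (n, k)) (∑' p, u p) := by
    have h1 := hus.hasSum.prod_fiberwise (fun k => (husk k).hasSum)
    have h2 : ∑' p : ℕ × ℕ, u p.swap = ∑' p, u p := (Equiv.prodComm ℕ ℕ).tsum_eq u
    rwa [h2] at h1
  have hle : ∀ k, ‖∑' n, a n * c n k‖ * r ^ k ≤ ∑' n, u (n, k) := by
    intro k
    have : ‖∑' n, a n * c n k‖ * r ^ k = ‖∑' n, a n * c n k * (r:ℂ) ^ k‖ := by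
      rw [tsum_mul_right, norm_mul, norm_pow, Complex.norm_of_nonneg hr]
    rw [this]
    refine tsum_of_norm_bounded (husk k).hasSum fun n => ?_
    simp only [u, norm_mul, norm_pow, Complex.norm_of_nonneg hr, mul_assoc, le_refl]
  have hsum := Summable.of_nonneg_of_le (fun n => by positivity) hle hust.summable
  refine ⟨fun k => ∑' n, a n * c n k, hsum, ?_, ?_⟩
  · refine (hsum.tsum_le_tsum hle hust.summable).trans ?_
    rw [hust.tsum_eq, hu.tsum_prod' hfib]
    exact Summable.tsum_le_tsum hfibt
      (Summable.of_nonneg_of_le (fun n => tsum_nonneg fun k => hu0 _) hfibt ha) ha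
  · intro z hz
    let v : ℕ × ℕ → ℂ := fun p => a p.1 * (c p.1 p.2 * z ^ p.2)
    have hv : Summable v := by
      refine Summable.of_norm_bounded hu fun p => ?_
      simp only [u, v, norm_mul, norm_pow]
      gcongr
    have h1 : HasSum (fun n => a n * φ z ^ n) (∑' p, v p) :=
      hv.hasSum.prod_fiberwise fun n => (hc n z hz).mul_left (a n)
    have h2 : ∑' p, v p = F (φ z) := h1.unique (hF _ (h.norm_le hz))
    have hvs : Summable fun p : ℕ × ℕ => v p.swap := (Equiv.prodComm ℕ ℕ).summable_iff.2 hv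
    have h3 := hvs.hasSum.prod_fiberwise (fun k => (hvs.prod_factor k).hasSum)
    have h4 : ∑' p : ℕ × ℕ, v p.swap = ∑' p, v p := (Equiv.prodComm ℕ ℕ).tsum_eq v
    rw [h4, h2] at h3
    refine h3.congr_fun' ?_
    intro k
    rw [← tsum_mul_right]
    refine tsum_congr fun n => ?_
    simp [v, mul_assoc]
end

section
theorem coeff_eq {p : ℂ → ℂ} {c : ℕ → ℂ} (hp : DifferentiableOn ℂ p (ball 0 1))
    (hc : ∀ z : ℂ, ‖z‖ < 1 → HasSum (fun k => c k * z ^ k) (p z)) (k : ℕ) :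
    c k = (k.factorial : ℂ)⁻¹ * iteratedDeriv k p 0 := by
  have := ps_uniq one_pos hc (b := fun k => (k.factorial : ℂ)⁻¹ * iteratedDeriv k p 0) (by
    intro z hz
    have := Complex.hasSum_taylorSeries_on_ball hp (z := z) (by simpa using hz)
    refine this.congr_fun' fun n => ?_
    simp only [sub_zero, smul_eq_mul]; ring)
  exact congrFun this k

theorem carath_aux {p : ℂ → ℂ} {c : ℕ → ℂ} (hp : DifferentiableOn ℂ p (ball 0 1))
    (hre : ∀ z ∈ ball (0:ℂ) 1, 0 ≤ (p z).re)
    (hc : ∀ z : ℂ, ‖z‖ < 1 → HasSum (fun k => c k * z ^ k) (p z)) {k : ℕ} (hk : k ≠ 0)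
    {ρ : ℝ} (h0 : 0 < ρ) (h1 : ρ < 1) : ‖c k‖ * ρ ^ k ≤ 2 * (p 0).re := by
  have hsub : closedBall (0:ℂ) ρ ⊆ ball 0 1 := closedBall_subset_ball h1
  have hd : DiffContOnCl ℂ p (ball 0 ρ) :=
    DifferentiableOn.diffContOnCl ((hp.mono hsub).mono (closure_ball_subset_closedBall))
  have habs : |ρ| = ρ := abs_of_pos h0
  have hcont : ContinuousOn p (sphere 0 |ρ|) := by
    rw [habs]; exact hp.continuousOn.mono (sphere_subset_closedBall.trans hsub)
  have hz0 : ∀ z ∈ sphere (0:ℂ) |ρ|, z ≠ 0 := by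
    intro z hz h; rw [habs] at hz; simp [h] at hz; exact h0.ne hz
  have A1 : Real.circleAverage (fun z => z⁻¹ ^ k * p z) 0 ρ = c k := by
    rw [Real.circleAverage_eq_circleIntegral h0.ne', coeff_eq hp hc k]
    have := hd.circleIntegral_one_div_sub_center_pow_smul h0 k
    simp only [sub_zero, smul_eq_mul, one_div] at this ⊢
    have e : (∮ z in C(0, ρ), z⁻¹ * (z⁻¹ ^ k * p z)) = ∮ z in C(0, ρ), (z ^ (k+1))⁻¹ * p z := by
      congr 1; ext z; rw [← inv_pow, pow_succ]; ring
    rw [e, this]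
    field_simp
  have hd2 : DiffContOnCl ℂ (fun z => z ^ k * p z) (ball 0 |ρ|) := by
    rw [habs]
    exact ((differentiable_id.pow k).diffContOnCl (s := ball 0 ρ)).smul hd
  have A2 : Real.circleAverage (fun z => z ^ k * p z) 0 ρ = 0 := by
    rw [hd2.circleAverage]; simp [hk]
  have i1 : CircleIntegrable (fun z => z⁻¹ ^ k * p z) 0 ρ := by
    apply ContinuousOn.circleIntegrable'
    exact ((continuousOn_id.inv₀ hz0).pow k).mul hcont
  have i2 : CircleIntegrable (fun z => z ^ k * p z) 0 ρ := by
    apply ContinuousOn.circleIntegrable'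
    exact ((continuousOn_id).pow k).mul hcont
  have A3 : Real.circleAverage (fun z => (starRingEnd ℂ) (z ^ k * p z)) 0 ρ = 0 := by
    have := (Complex.conjCLE : ℂ ≃L[ℝ] ℂ).toContinuousLinearMap.circleAverage_comp_comm i2
    rw [A2, map_zero] at this
    exact this
  have i3 : CircleIntegrable (fun z => (starRingEnd ℂ) (z ^ k * p z)) 0 ρ := by
    apply ContinuousOn.circleIntegrable'
    exact Complex.continuous_conj.comp_continuousOn (((continuousOn_id).pow k).mul hcont)
  have A4 : Real.circleAverage (fun z => z⁻¹ ^ k * p z +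
      ((ρ : ℂ) ^ (2*k))⁻¹ • (starRingEnd ℂ) (z ^ k * p z)) 0 ρ = c k := by
    have i4 : CircleIntegrable
        (fun z => ((ρ : ℂ) ^ (2*k))⁻¹ • (starRingEnd ℂ) (z ^ k * p z)) 0 ρ := i3.const_smul
    rw [Real.circleAverage_fun_add i1 i4, Real.circleAverage_fun_smul, A1, A3]
    simp
  have A5 : Real.circleAverage (fun z => z⁻¹ ^ k * ((2 * (p z).re : ℝ) : ℂ)) 0 ρ = c k := by
    rw [← A4]
    apply Real.circleAverage_congr_sphere
    intro z hz
    have hzn := hz0 z hz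
    have hn : ‖z‖ = ρ := by rw [habs] at hz; simpa using hz
    have hcj : (starRingEnd ℂ) z = (ρ:ℂ) ^ 2 * z⁻¹ := by
      rw [← hn, ← Complex.conj_mul' z]; field_simp
    have hρ : (ρ : ℂ) ≠ 0 := by exact_mod_cast h0.ne'
    simp only [smul_eq_mul, map_mul, map_pow, hcj]
    rw [← Complex.add_conj, mul_pow, ← pow_mul, mul_assoc, inv_mul_cancel_left₀ (pow_ne_zero _ hρ)]
    ring
  have ir : CircleIntegrable (fun z => (p z).re) 0 ρ := by
    apply ContinuousOn.circleIntegrable'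
    exact Complex.continuous_re.comp_continuousOn hcont
  have A6 : Real.circleAverage (fun z => (p z).re) 0 ρ = (p 0).re := by
    have ip : CircleIntegrable p 0 ρ := hcont.circleIntegrable'
    have := Complex.reCLM.circleAverage_comp_comm ip
    rw [DiffContOnCl.circleAverage (by rwa [habs])] at this
    simpa using! this
  have A7 : ‖c k‖ ≤ Real.circleAverage (fun z => (2 * (ρ ^ k)⁻¹) • (p z).re) 0 ρ := by
    rw [← A5, Real.circleAverage, Real.circleAverage, norm_smul, smul_eq_mul]
    rw [Real.norm_of_nonneg (by positivity)]
    gcongr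
    refine (intervalIntegral.norm_integral_le_integral_norm (by positivity)).trans_eq ?_
    congr 1
    ext θ
    have hn : ‖circleMap 0 ρ θ‖ = ρ := by simp [habs]
    have hge : 0 ≤ (p (circleMap 0 ρ θ)).re := hre _ (by simp [habs, h1])
    rw [norm_mul, norm_pow, norm_inv, hn, Complex.norm_of_nonneg (by positivity), smul_eq_mul,
      inv_pow]
    ring
  rw [Real.circleAverage_fun_smul, A6, smul_eq_mul] at A7
  calc ‖c k‖ * ρ ^ k ≤ (2 * (ρ ^ k)⁻¹ * (p 0).re) * ρ ^ k := by gcongr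
    _ = _ := by field_simp

theorem carath {p : ℂ → ℂ} {c : ℕ → ℂ} (hp : DifferentiableOn ℂ p (ball 0 1))
    (hre : ∀ z ∈ ball (0:ℂ) 1, 0 ≤ (p z).re)
    (hc : ∀ z : ℂ, ‖z‖ < 1 → HasSum (fun k => c k * z ^ k) (p z)) {k : ℕ} (hk : k ≠ 0) :
    ‖c k‖ ≤ 2 * (p 0).re := by
  have ht : Filter.Tendsto (fun ρ : ℝ => ‖c k‖ * ρ ^ k) (nhdsWithin 1 (Iio 1)) (nhds (‖c k‖)) := by
    have : Continuous (fun ρ : ℝ => ‖c k‖ * ρ ^ k) := by fun_prop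
    have h := this.tendsto 1
    simp only [one_pow, mul_one] at h
    exact h.mono_left nhdsWithin_le_nhds
  refine le_of_tendsto ht ?_
  filter_upwards [Ioo_mem_nhdsLT (zero_lt_one)] with ρ hρ
  exact carath_aux hp hre hc hk hρ.1 hρ.2

/-- Bohr + Schwarz -/
theorem maj_schwarz {ω : ℂ → ℂ} (hω : DifferentiableOn ℂ ω (ball 0 1)) (h0 : ω 0 = 0)
    (hm : ∀ z ∈ ball (0:ℂ) 1, ω z ∈ ball (0:ℂ) 1) {r : ℝ} (hr : 0 ≤ r) (hr3 : r ≤ 1/3) :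
    Maj ω r r := by
  set φ := dslope ω 0 with hφ
  have hφd : DifferentiableOn ℂ φ (ball 0 1) :=
    (Complex.differentiableOn_dslope (ball_mem_nhds _ one_pos)).2 hω
  have hφ1 : ∀ z ∈ ball (0:ℂ) 1, ‖φ z‖ ≤ 1 := by
    intro z hz
    have := Complex.norm_dslope_le_div_of_mapsTo_ball (R₂ := 1) hω
      (fun w hw => by rw [h0]; exact ball_subset_closedBall (hm w hw)) hz
    simpa using this
  set c : ℕ → ℂ := fun k => (k.factorial : ℂ)⁻¹ * iteratedDeriv k φ 0 with hcdef
  have hc : ∀ z : ℂ, ‖z‖ < 1 → HasSum (fun k => c k * z ^ k) (φ z) := by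
    intro z hz
    have := Complex.hasSum_taylorSeries_on_ball hφd (z := z) (by simpa using hz)
    refine this.congr_fun' fun n => ?_
    simp only [sub_zero, smul_eq_mul, c]; ring
  have hc0 : c 0 = φ 0 := by simp [c]
  obtain ⟨u, hu1, hu⟩ : ∃ u : ℂ, ‖u‖ = 1 ∧ u * c 0 = ‖c 0‖ := by
    by_cases h : c 0 = 0
    · exact ⟨1, by simp, by simp [h]⟩
    · have hn : (‖c 0‖ : ℂ) ≠ 0 := by simpa using h
      refine ⟨‖c 0‖ / c 0, ?_, by field_simp⟩
      have : ‖c 0‖ ≠ 0 := by simpa using h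
      simp [this]
  have hck : ∀ k, k ≠ 0 → ‖c k‖ ≤ 2 * (1 - ‖c 0‖) := by
    intro k hk
    have := carath (p := fun z => 1 - u * φ z)
      (c := fun k => (if k = 0 then 1 else 0) - u * c k)
      ((differentiableOn_const _).sub (hφd.const_mul u)) ?_ ?_ hk
    · simp only [hk, if_false, zero_sub, norm_neg, norm_mul, hu1, one_mul, ← hc0, hu] at this
      simpa using this
    · intro z hz
      have h2 : ‖u * φ z‖ ≤ 1 := by rw [norm_mul, hu1, one_mul]; exact hφ1 z hz
      have := (Complex.re_le_norm (u * φ z)).trans h2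
      simp only [Complex.sub_re, Complex.one_re]; linarith
    · intro z hz
      have h1 : HasSum (fun k : ℕ => (if k = 0 then (1:ℂ) else 0) * z ^ k) 1 := by
        convert hasSum_single (f := fun k : ℕ => (if k = 0 then (1:ℂ) else 0) * z ^ k) 0 ?_ using 1
        · simp
        · intro k hk; simp [hk]
      have h2 := h1.sub ((hc z hz).mul_left u)
      refine h2.congr_fun' fun n => ?_
      ring
  have hr1 : r < 1 := by linarith
  have hMφ : Maj φ r 1 := by
    have hs : Summable (fun k => ‖c k‖ * r ^ k) := by
      have := (hc r (by rw [Complex.norm_of_nonneg hr]; exact hr1)).summable.norm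
      simpa [norm_mul, norm_pow, abs_of_nonneg hr] using this
    refine ⟨c, hs, ?_, fun z hz => hc z (hz.trans_lt hr1)⟩
    rw [hs.tsum_eq_zero_add]
    have hg : HasSum (fun k : ℕ => (2 * (1 - ‖c 0‖) * r) * r ^ k)
        ((2 * (1 - ‖c 0‖) * r) * (1 - r)⁻¹) := (hasSum_geometric_of_lt_one hr hr1).mul_left _
    have h1 : ∑' k, ‖c (k+1)‖ * r ^ (k+1) ≤ (2 * (1 - ‖c 0‖) * r) * (1 - r)⁻¹ := by
      rw [← hg.tsum_eq]
      refine Summable.tsum_le_tsum ?_ ((summable_nat_add_iff 1).2 hs) hg.summable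
      intro k
      calc ‖c (k+1)‖ * r ^ (k+1) ≤ (2 * (1 - ‖c 0‖)) * r ^ (k+1) := by
            gcongr; exact hck _ (by omega)
        _ = _ := by ring
    have hcle : ‖c 0‖ ≤ 1 := by rw [hc0]; exact hφ1 0 (by simp)
    have h2 : (2 * (1 - ‖c 0‖) * r) * (1 - r)⁻¹ ≤ 1 - ‖c 0‖ := by
      rw [← div_eq_mul_inv, div_le_iff₀ (by linarith)]
      nlinarith
    simp only [pow_zero, mul_one]
    linarith
  have := (Maj.id (r := r)).mul hr hMφ
  rw [mul_one] at this
  convert this using 2 with z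
  have := sub_smul_dslope ω 0 z
  simp only [sub_zero, h0, smul_eq_mul] at this
  exact this.symm
end

section
theorem star_log {f : ℂ → ℂ} (hf : DifferentiableOn ℂ f (ball 0 1)) (f0 : f 0 = 0)
    (f1 : deriv f 0 = 1) (hne : ∀ z ∈ ball (0:ℂ) 1, z ≠ 0 → f z ≠ 0) :
    ∃ h : ℂ → ℂ, DifferentiableOn ℂ h (ball 0 1) ∧ h 0 = 0 ∧
      (∀ z ∈ ball (0:ℂ) 1, f z = z * exp (h z)) ∧
      ∀ z ∈ ball (0:ℂ) 1, z ≠ 0 → z * deriv f z / f z = 1 + z * deriv h z := by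
  set F := dslope f 0 with hF
  have hFd : DifferentiableOn ℂ F (ball 0 1) :=
    (Complex.differentiableOn_dslope (ball_mem_nhds _ one_pos)).2 hf
  have hfF : ∀ z, f z = z * F z := by
    intro z
    have := sub_smul_dslope f 0 z
    simp only [sub_zero, f0, smul_eq_mul] at this
    exact this.symm
  have F0 : F 0 = 1 := by rw [hF, dslope_same, f1]
  have hFne : ∀ z ∈ ball (0:ℂ) 1, F z ≠ 0 := by
    intro z hz h
    by_cases h0 : z = 0
    · rw [h0, F0] at h; exact one_ne_zero h
    · exact hne z hz h0 (by rw [hfF, h, mul_zero])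
  have hq : DifferentiableOn ℂ (fun z => deriv F z / F z) (ball 0 1) :=
    (hFd.deriv isOpen_ball).div hFd hFne
  obtain ⟨h, h0, hh⟩ := hq.isExactOn_ball.with_val_at 0 0
  have hFat : ∀ z ∈ ball (0:ℂ) 1, HasDerivAt F (deriv F z) z := fun z hz =>
    (hFd.differentiableAt (isOpen_ball.mem_nhds hz)).hasDerivAt
  have hcd : ∀ z ∈ ball (0:ℂ) 1, HasDerivAt (fun z => exp (-h z) * F z) 0 z := by
    intro z hz
    have := ((hh z hz).neg.cexp).mul (hFat z hz)
    refine this.congr_deriv ?_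
    have := hFne z hz
    simp only [Pi.neg_apply]
    field_simp
    ring
  have hconst : ∀ z ∈ ball (0:ℂ) 1, exp (-h z) * F z = 1 := by
    intro z hz
    obtain ⟨a, ha⟩ := isOpen_ball.exists_is_const_of_deriv_eq_zero
      (convex_ball (0:ℂ) 1).isPreconnected
      (f := fun z => exp (-h z) * F z) (fun z hz => (hcd z hz).differentiableAt.differentiableWithinAt)
      (fun z hz => (hcd z hz).deriv)
    have e0 := ha 0 (by simp)
    simp only [h0, F0, neg_zero, exp_zero, mul_one] at e0
    rw [e0]; exact ha z hz
  have hFe : ∀ z ∈ ball (0:ℂ) 1, F z = exp (h z) := by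
    intro z hz
    have := hconst z hz
    rw [exp_neg] at this
    have hne := exp_ne_zero (h z)
    field_simp at this
    exact this
  refine ⟨h, fun z hz => (hh z hz).differentiableAt.differentiableWithinAt, h0, ?_, ?_⟩
  · intro z hz; rw [hfF, hFe z hz]
  · intro z hz hz0
    have hd : HasDerivAt f (1 * F z + z * deriv F z) z := by
      have := (hasDerivAt_id z).mul (hFat z hz)
      have e : f = (fun z => id z * F z) := funext hfF
      rw [e]; exact this
    rw [hd.deriv, (hh z hz).deriv, hfF]
    have := hFne z hz
    field_simp

theorem re_lower {p : ℂ → ℂ} (hp : DifferentiableOn ℂ p (ball 0 1)) (p0 : p 0 = 1)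
    (hre : ∀ z ∈ ball (0:ℂ) 1, 0 < (p z).re) {z : ℂ} (hz : z ∈ ball (0:ℂ) 1) :
    (1 - ‖z‖) / (1 + ‖z‖) ≤ (p z).re := by
  have hne : ∀ z ∈ ball (0:ℂ) 1, p z + 1 ≠ 0 := by
    intro z hz h
    have := hre z hz
    have h2 := congrArg Complex.re h
    simp at h2; linarith
  have hsq : ∀ w : ℂ, 0 < w.re → ‖(w - 1) / (w + 1)‖ < 1 := by
    intro w hw
    have hne : w + 1 ≠ 0 := by
      intro h
      have h2 := congrArg Complex.re h
      simp at h2; linarith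
    rw [norm_div, div_lt_one (norm_pos_iff.2 hne)]
    refine lt_of_pow_lt_pow_left₀ 2 (norm_nonneg _) ?_
    rw [← Complex.normSq_eq_norm_sq, ← Complex.normSq_eq_norm_sq, normSq_apply, normSq_apply]
    simp; nlinarith
  have hd : DifferentiableOn ℂ (fun z => (p z - 1) / (p z + 1)) (ball 0 1) :=
    (hp.sub_const 1).div (hp.add_const 1) hne
  have hs := Complex.norm_le_norm_of_mapsTo_ball hd
    (fun w hw => by simpa using (hsq _ (hre w hw)).le) (by simp [p0]) (z := z) (by simpa using hz)
  rw [norm_div, div_le_iff₀ (norm_pos_iff.2 (hne z hz))] at hs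
  have hz1 : ‖z‖ < 1 := by simpa using hz
  have hzn := norm_nonneg z
  have h2 := pow_le_pow_left₀ (norm_nonneg _) hs 2
  rw [mul_pow, ← Complex.normSq_eq_norm_sq, ← Complex.normSq_eq_norm_sq (p z + 1), normSq_apply,
    normSq_apply] at h2
  simp only [sub_re, one_re, sub_im, one_im, add_re, add_im, sub_zero, add_zero] at h2
  set x := (p z).re with hx
  have hxp : 0 < x := hre z hz
  set y := (p z).im
  set t := ‖z‖
  rw [div_le_iff₀ (by linarith)]
  have h3 : (x - 1)^2 ≤ (t * (x+1))^2 := by nlinarith [mul_nonneg (sq_nonneg y) (by nlinarith : 0 ≤ 1 - t^2)]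
  have h4 := abs_le.1 (abs_le_of_sq_le_sq h3 (by positivity))
  linarith [h4.1, h4.2]

section
variable {α : ℝ} {h : ℂ → ℂ}

theorem h_coeff (hd : DifferentiableOn ℂ h (ball 0 1))
    (hre : ∀ z ∈ ball (0:ℂ) 1, α < (1 + z * deriv h z).re)
    {c : ℕ → ℂ} (hc : ∀ z : ℂ, ‖z‖ < 1 → HasSum (fun k => c k * z ^ k) (h z)) (k : ℕ) :
    ‖c (k+1)‖ ≤ 2 * (1 - α) / (k + 1) := by
  have hdd := hd.deriv isOpen_ball
  have key := carath (p := fun z => (1 + z * deriv h z) - α)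
    (c := fun k => if k = 0 then ((1 - α : ℝ) : ℂ) else k * c k)
    (((differentiableOn_id.mul hdd).const_add 1).sub_const _) ?_ ?_ (k := k+1) (by omega)
  · simp only [Nat.add_eq_zero_iff, one_ne_zero, and_false, if_false, norm_mul, zero_mul, add_zero,
      sub_re, one_re, ofReal_re, Complex.norm_natCast] at key
    rw [le_div_iff₀ (by positivity), mul_comm]
    push_cast at key
    exact key
  · intro z hz
    have := hre z hz
    simp only [sub_re, ofReal_re]; linarith
  · intro z hz
    have h1 := (Complex.hasSum_taylorSeries_on_ball hdd (z := z) (by simpa using hz)).mul_left z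
    rw [← hasSum_nat_add_iff' 1]
    have e : 1 + z * deriv h z - α - ∑ i ∈ Finset.range 1,
      (if i = 0 then ((1 - α : ℝ) : ℂ) else i * c i) * z ^ i = z * deriv h z := by
      simp
    rw [e]
    refine h1.congr_fun' fun n => ?_
    rw [coeff_eq hd hc (n+1), iteratedDeriv_succ']
    simp only [Nat.add_eq_zero_iff, one_ne_zero, and_false, if_false, sub_zero, smul_eq_mul]
    rw [Nat.factorial_succ]
    have : (n.factorial : ℂ) ≠ 0 := by exact_mod_cast n.factorial_ne_zero
    have : (n : ℂ) + 1 ≠ 0 := by exact_mod_cast n.succ_ne_zero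
    push_cast
    field_simp
    ring

theorem maj_h (hd : DifferentiableOn ℂ h (ball 0 1)) (h0 : h 0 = 0)
    (hre : ∀ z ∈ ball (0:ℂ) 1, α < (1 + z * deriv h z).re) {r : ℝ} (hr : 0 ≤ r) (hr1 : r < 1) :
    Maj h r (2 * (1 - α) * (-Real.log (1 - r))) := by
  set c : ℕ → ℂ := fun k => (k.factorial : ℂ)⁻¹ * iteratedDeriv k h 0 with hcdef
  have hc : ∀ z : ℂ, ‖z‖ < 1 → HasSum (fun k => c k * z ^ k) (h z) := by
    intro z hz
    have := Complex.hasSum_taylorSeries_on_ball hd (z := z) (by simpa using hz)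
    refine this.congr_fun' fun n => ?_
    simp only [sub_zero, smul_eq_mul, c]; ring
  have hc0 : c 0 = 0 := by simp [c, h0]
  have hs : Summable (fun k => ‖c k‖ * r ^ k) := by
    have := (hc r (by rw [Complex.norm_of_nonneg hr]; exact hr1)).summable.norm
    simpa [norm_mul, norm_pow, abs_of_nonneg hr] using this
  refine ⟨c, hs, ?_, fun z hz => hc z (hz.trans_lt hr1)⟩
  have hl := (Real.hasSum_pow_div_log_of_abs_lt_one (x := r) (by rwa [abs_of_nonneg hr])).mul_left
    (2 * (1 - α))
  rw [hs.tsum_eq_zero_add, hc0, norm_zero, zero_mul, zero_add, ← hl.tsum_eq]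
  refine Summable.tsum_le_tsum ?_ ((summable_nat_add_iff 1).2 hs) hl.summable
  intro k
  calc ‖c (k+1)‖ * r ^ (k+1) ≤ (2 * (1 - α) / (k + 1)) * r ^ (k+1) := by
        gcongr; exact h_coeff hd hre hc k
    _ = _ := by ring

theorem maj_exp {r B : ℝ} (hr : 0 ≤ r) (hh : Maj h r B) :
    Maj (fun z => exp (h z)) r (Real.exp B) := by
  have e1 := NormedSpace.expSeries_div_hasSum_exp (𝔸 := ℝ) B
  rw [← Real.exp_eq_exp_ℝ] at e1
  have en : ∀ n : ℕ, ‖((n.factorial : ℂ)⁻¹)‖ * B ^ n = B ^ n / n.factorial := by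
    intro n; rw [norm_inv, Complex.norm_natCast]; field_simp
  have := hh.comp (F := exp) hr (fun n => ((n.factorial : ℂ)⁻¹)) (by simpa only [en] using e1.summable) (by
    intro w hw
    have e2 := NormedSpace.expSeries_div_hasSum_exp (𝔸 := ℂ) w
    rw [← Complex.exp_eq_exp_ℂ] at e2
    refine e2.congr_fun' fun n => ?_
    field_simp)
  simp only [en] at this
  rwa [e1.tsum_eq] at this

theorem star_growth (hα : α < 1) (hd : DifferentiableOn ℂ h (ball 0 1)) (h0 : h 0 = 0)
    (hre : ∀ z ∈ ball (0:ℂ) 1, α < (1 + z * deriv h z).re) {z : ℂ} (hz : z ∈ ball (0:ℂ) 1) :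
    -(2 * (1 - α) * Real.log (1 + ‖z‖)) ≤ (h z).re := by
  have hz1 : ‖z‖ < 1 := by simpa using hz
  have hdd := hd.deriv isOpen_ball
  have hmem : ∀ t ∈ Icc (0:ℝ) 1, (t:ℂ) * z ∈ ball (0:ℂ) 1 := by
    intro t ht
    simp only [mem_ball_zero_iff, norm_mul, Complex.norm_of_nonneg ht.1]
    nlinarith [ht.1, ht.2, norm_nonneg z]
  have hder : ∀ t ∈ Icc (0:ℝ) 1, HasDerivAt
      (fun t : ℝ => (h (t * z)).re + 2 * (1 - α) * Real.log (1 + t * ‖z‖))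
      ((deriv h (t * z) * z).re + 2 * (1 - α) * (‖z‖ / (1 + t * ‖z‖))) t := by
    intro t ht
    have hpos : 0 < 1 + t * ‖z‖ := by have := mul_nonneg ht.1 (norm_nonneg z); linarith
    have a1 : HasDerivAt h (deriv h (t * z)) ((t:ℂ) * z) :=
      (hd.differentiableAt (isOpen_ball.mem_nhds (hmem t ht))).hasDerivAt
    have a2 : HasDerivAt (fun s : ℂ => h (s * z)) (deriv h (t * z) * z) (t : ℂ) := by
      have := a1.comp (t:ℂ) ((hasDerivAt_id (t:ℂ)).mul_const z)
      simpa using! this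
    have a3 := a2.real_of_complex
    have a4 : HasDerivAt (fun t : ℝ => 1 + t * ‖z‖) (‖z‖) t := by
      simpa using ((hasDerivAt_id t).mul_const ‖z‖).const_add 1
    exact a3.add ((a4.log hpos.ne').const_mul _)
  have hmono : MonotoneOn (fun t : ℝ => (h (t * z)).re + 2 * (1 - α) * Real.log (1 + t * ‖z‖))
      (Icc 0 1) := by
    refine monotoneOn_of_hasDerivWithinAt_nonneg (convex_Icc 0 1)
      (fun t ht => (hder t ht).continuousAt.continuousWithinAt)
      (fun t ht => (hder t (interior_subset ht)).hasDerivWithinAt) ?_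
    intro t ht
    rw [interior_Icc] at ht
    have htp : 0 < t := ht.1
    have hw := hmem t ⟨ht.1.le, ht.2.le⟩
    have hp := re_lower (p := fun z => ((1 + z * deriv h z) - α) / ((1 - α : ℝ) : ℂ))
      ((((differentiableOn_id.mul hdd).const_add 1).sub_const _).div_const _) (by
        have : ((1 - α : ℝ) : ℂ) ≠ 0 := by exact_mod_cast (by linarith : (1 - α) ≠ 0)
        simp only [zero_mul, add_zero]
        rw [div_eq_one_iff_eq this]; push_cast; rfl) (by
        intro z hz
        rw [Complex.div_ofReal_re]
        have := hre z hz
        apply div_pos _ (by linarith)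
        simp only [sub_re, ofReal_re]; linarith) hw
    rw [Complex.div_ofReal_re, le_div_iff₀ (by linarith)] at hp
    have e : ((1 : ℂ) + t * z * deriv h (t * z) - α).re = 1 - α + t * (deriv h (t * z) * z).re := by
      have : (t : ℂ) * z * deriv h (t * z) = t * (deriv h (t*z) * z) := by ring
      rw [this, sub_re, add_re, re_ofReal_mul, one_re, ofReal_re]; ring
    rw [e, norm_mul, Complex.norm_of_nonneg htp.le] at hp
    set D := (deriv h (t * z) * z).re
    have hpos : 0 < 1 + t * ‖z‖ := by have := mul_nonneg htp.le (norm_nonneg z); linarith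
    have h1 : 0 ≤ t * (D + 2 * (1 - α) * (‖z‖ / (1 + t * ‖z‖))) := by
      have e2 : t * (D + 2 * (1 - α) * (‖z‖ / (1 + t * ‖z‖))) =
        (1 - α + t * D) - (1 - t * ‖z‖) / (1 + t * ‖z‖) * (1 - α) := by
        field_simp; ring
      rw [e2]; linarith
    exact nonneg_of_mul_nonneg_right h1 htp
  have := hmono (left_mem_Icc.2 zero_le_one) (right_mem_Icc.2 zero_le_one) zero_le_one
  simp [h0] at this
  linarith

theorem starlike_inj (hα : 0 ≤ α) (hd : DifferentiableOn ℂ h (ball 0 1))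
    (hre : ∀ z ∈ ball (0:ℂ) 1, α < (1 + z * deriv h z).re) :
    InjOn (fun z => z * exp (h z)) (ball (0:ℂ) 1) := by
  set G : ℂ → ℂ := fun ζ => ζ + h (exp ζ) with hG
  have hmem : ∀ ζ : ℂ, ζ.re < 0 → exp ζ ∈ ball (0:ℂ) 1 := by
    intro ζ hζ
    simpa [Complex.norm_exp] using hζ
  have hGd : ∀ ζ : ℂ, ζ.re < 0 → HasDerivAt G (1 + exp ζ * deriv h (exp ζ)) ζ := by
    intro ζ hζ
    have a1 : HasDerivAt h (deriv h (exp ζ)) (exp ζ) :=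
      (hd.differentiableAt (isOpen_ball.mem_nhds (hmem ζ hζ))).hasDerivAt
    have := (hasDerivAt_id ζ).add (a1.comp ζ (hasDerivAt_exp ζ))
    rw [mul_comm] at this
    exact this
  have hGinj : ∀ a b : ℂ, a.re < 0 → b.re < 0 → G a = G b → a = b := by
    intro a b ha hb hab
    by_contra hne
    have hdne : b - a ≠ 0 := sub_ne_zero.2 (Ne.symm hne)
    have hline : ∀ t ∈ Icc (0:ℝ) 1, (a + t * (b - a)).re < 0 := by
      intro t ht
      rw [add_re, re_ofReal_mul, sub_re]
      obtain ⟨h1, h2⟩ := ht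
      rcases eq_or_lt_of_le h1 with h1 | h1
      · rw [← h1]; simpa using ha
      · nlinarith
    have hder : ∀ t ∈ Icc (0:ℝ) 1, HasDerivAt (fun t : ℝ => (G (a + t * (b - a)) / (b - a)).re)
        (1 + exp (a + t * (b - a)) * deriv h (exp (a + t * (b - a)))).re t := by
      intro t ht
      have l : HasDerivAt (fun s : ℂ => a + s * (b - a)) (b - a) (t : ℂ) := by
        simpa using! ((hasDerivAt_id (t:ℂ)).mul_const (b - a)).const_add a
      have := ((hGd _ (hline t ht)).comp (t:ℂ) l).div_const (b - a)
      rw [mul_div_cancel_right₀ _ hdne] at this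
      exact this.real_of_complex
    have hmono : StrictMonoOn (fun t : ℝ => (G (a + t * (b - a)) / (b - a)).re) (Icc 0 1) := by
      refine strictMonoOn_of_hasDerivWithinAt_pos (convex_Icc 0 1)
        (fun t ht => (hder t ht).continuousAt.continuousWithinAt)
        (fun t ht => (hder t (interior_subset ht)).hasDerivWithinAt) ?_
      intro t ht
      exact hα.trans_lt (hre _ (hmem _ (hline t (interior_subset ht))))
    have := hmono (left_mem_Icc.2 zero_le_one) (right_mem_Icc.2 zero_le_one) zero_lt_one
    simp [hab] at this
  intro z hz w hw hzw
  simp only at hzw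
  by_cases z0 : z = 0
  · rw [z0, zero_mul, eq_comm, mul_eq_zero] at hzw
    rw [z0]; exact (hzw.resolve_right (exp_ne_zero _)).symm
  by_cases w0 : w = 0
  · rw [w0, zero_mul, mul_eq_zero] at hzw
    rw [w0]; exact hzw.resolve_right (exp_ne_zero _)
  have hre' : ∀ z ∈ ball (0:ℂ) 1, z ≠ 0 → (log z).re < 0 := by
    intro z hz hz0
    rw [log_re]
    exact Real.log_neg (norm_pos_iff.2 hz0) (by simpa using hz)
  have hGe : ∀ z, z ≠ 0 → exp (G (log z)) = z * exp (h z) := by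
    intro z hz
    simp only [hG]
    rw [exp_add, exp_log hz]
  rw [← hGe z z0, ← hGe w w0, exp_eq_exp_iff_exists_int] at hzw
  obtain ⟨n, hn⟩ := hzw
  have hn2 : G (log z) = G (log w + n * (2 * Real.pi * I)) := by
    rw [hn]
    simp only [hG]
    rw [exp_periodic.int_mul n (log w)]; ring
  have := hGinj _ _ (hre' z hz z0) (by simpa using hre' w hw w0) hn2
  rw [← exp_log z0, this, exp_periodic.int_mul n (log w), exp_log w0]

end
end

section
theorem open_image {f : ℂ → ℂ} (hf : DifferentiableOn ℂ f (ball 0 1)) (hi : InjOn f (ball 0 1)) :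
    ∀ s ⊆ ball (0:ℂ) 1, IsOpen s → IsOpen (f '' s) := by
  have ha : AnalyticOnNhd ℂ f (ball 0 1) := hf.analyticOnNhd isOpen_ball
  rcases ha.is_constant_or_isOpen (convex_ball (0:ℂ) 1).isPreconnected with ⟨w, hw⟩ | h
  · exfalso
    have h1 : (0:ℂ) ∈ ball (0:ℂ) 1 := by simp
    have h2 : (1/2:ℂ) ∈ ball (0:ℂ) 1 := by simp; norm_num
    have := hi h1 h2 (by rw [hw _ h1, hw _ h2])
    norm_num at this
  · exact h

theorem image_ne_univ {f : ℂ → ℂ} (hf : DifferentiableOn ℂ f (ball 0 1))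
    (hi : InjOn f (ball 0 1)) (hd : ∀ z ∈ ball (0:ℂ) 1, deriv f z ≠ 0) :
    f '' ball 0 1 ≠ univ := by
  intro hu
  have hs : ∀ w, ∃ z ∈ ball (0:ℂ) 1, f z = w := fun w => by
    have : w ∈ f '' ball 0 1 := by rw [hu]; trivial
    exact this
  choose g hg hfg using hs
  have hgf : ∀ z ∈ ball (0:ℂ) 1, g (f z) = z := fun z hz => hi (hg _) hz (hfg _)
  have hgc : Continuous g := by
    rw [continuous_def]
    intro V hV
    have : g ⁻¹' V = f '' (V ∩ ball 0 1) := by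
      ext w
      constructor
      · intro hw; exact ⟨g w, ⟨hw, hg w⟩, hfg w⟩
      · rintro ⟨z, ⟨hz, hz1⟩, rfl⟩
        simpa [hgf z hz1] using hz
    rw [this]
    exact open_image hf hi _ inter_subset_right (hV.inter isOpen_ball)
  have hgd : Differentiable ℂ g := by
    intro w
    have h1 : HasDerivAt f (deriv f (g w)) (g w) :=
      (hf.differentiableAt (isOpen_ball.mem_nhds (hg w))).hasDerivAt
    exact (HasDerivAt.of_local_left_inverse hgc.continuousAt h1 (hd _ (hg w))
      (Filter.Eventually.of_forall hfg)).differentiableAt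
  have hb : Bornology.IsBounded (range g) :=
    isBounded_ball.subset (by rintro _ ⟨w, rfl⟩; exact hg w)
  have := hgd.apply_eq_apply_of_bounded hb 0 1
  have h2 := congrArg f this
  rw [hfg, hfg] at h2
  exact zero_ne_one h2

theorem frontier_bound {f : ℂ → ℂ} (hf : DifferentiableOn ℂ f (ball 0 1))
    (ho : IsOpen (f '' ball 0 1)) {m : ℝ → ℝ} (hm : ContinuousAt m 1)
    (hle : ∀ z ∈ ball (0:ℂ) 1, m ‖z‖ ≤ ‖f z‖) {w : ℂ} (hw : w ∈ frontier (f '' ball 0 1)) :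
    m 1 ≤ ‖w‖ := by
  rw [ho.frontier_eq] at hw
  obtain ⟨hwc, hwn⟩ := hw
  obtain ⟨x, hx, hxl⟩ := mem_closure_iff_seq_limit.1 hwc
  choose z hz hzx using hx
  obtain ⟨a, ha, φ, hφ, hlim⟩ := (isCompact_closedBall (0:ℂ) 1).tendsto_subseq
    (fun n => ball_subset_closedBall (hz n))
  have hfl : Filter.Tendsto (fun n => f (z (φ n))) Filter.atTop (nhds w) := by
    simp only [hzx]; exact hxl.comp hφ.tendsto_atTop
  by_cases ha1 : a ∈ ball (0:ℂ) 1
  · exfalso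
    have hc : ContinuousAt f a := (hf.differentiableAt (isOpen_ball.mem_nhds ha1)).continuousAt
    have : Filter.Tendsto (fun n => f (z (φ n))) Filter.atTop (nhds (f a)) := hc.tendsto.comp hlim
    exact hwn ⟨a, ha1, tendsto_nhds_unique this hfl⟩
  · have han : ‖a‖ = 1 := by
      simp at ha ha1; exact le_antisymm ha ha1
    have h1 : Filter.Tendsto (fun n => m ‖z (φ n)‖) Filter.atTop (nhds (m 1)) := by
      rw [← han] at hm ⊢
      exact hm.tendsto.comp hlim.norm
    exact le_of_tendsto_of_tendsto' h1 hfl.norm (fun n => hle _ (hz _))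

theorem Maj.congr {φ ψ : ℂ → ℂ} {r B : ℝ} (h : Maj φ r B) (e : ∀ z, ‖z‖ ≤ r → ψ z = φ z) :
    Maj ψ r B := by
  obtain ⟨c, hs, hB, hc⟩ := h
  exact ⟨c, hs, hB, fun z hz => by rw [e z hz]; exact hc z hz⟩

theorem r_le_third {s r : ℝ} (hs : 1 ≤ s) (hr : 0 < r) (hr1 : r < 1)
    (heq : (1 - r) ^ s = 2 ^ s * r) : r ≤ 1/3 := by
  by_contra hcon
  push Not at hcon
  have h1 : (1 - r) ^ s ≤ (2 * (1/3)) ^ s := Real.rpow_le_rpow (by linarith) (by linarith) (by linarith)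
  rw [Real.mul_rpow (by norm_num) (by norm_num), heq] at h1
  have h2 : r ≤ (1/3:ℝ) ^ s := le_of_mul_le_mul_left h1 (by positivity)
  have h3 : (1/3:ℝ) ^ s ≤ (1/3:ℝ) ^ (1:ℝ) :=
    Real.rpow_le_rpow_of_exponent_ge (by norm_num) (by norm_num) hs
  rw [Real.rpow_one] at h3
  linarith

theorem main_aux (α : ℝ) (hα0 : 0 ≤ α) (hα1 : α ≤ 1/2)
    (f g ω : ℂ → ℂ) (hf : DifferentiableOn ℂ f (ball 0 1)) (f0 : f 0 = 0) (f1 : deriv f 0 = 1)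
    (hne : ∀ z ∈ ball (0:ℂ) 1, z ≠ 0 → f z ≠ 0)
    (hst : ∀ z ∈ ball (0:ℂ) 1, z ≠ 0 → α < (z * deriv f z / f z).re)
    (hω : DifferentiableOn ℂ ω (ball 0 1)) (ω0 : ω 0 = 0)
    (hωm : ∀ z ∈ ball (0:ℂ) 1, ω z ∈ ball (0:ℂ) 1) (hg : ∀ z ∈ ball (0:ℂ) 1, g z = f (ω z))
    (b : ℕ → ℂ) (hb0 : b 0 = 0)
    (hrep : ∀ z ∈ ball (0:ℂ) 1, HasSum (fun k => b k * z^k) (g z))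
    (r₀ : ℝ) (hr₀ : 0 < r₀) (hr₀1 : r₀ < 1)
    (heq : (1 - r₀) ^ ((2*(1-α) : ℝ)) = 2 ^ ((2*(1-α) : ℝ)) * r₀) (r : ℝ) (hr : 0 ≤ r)
    (hrr : r ≤ r₀) :
      Summable (fun k : ℕ => ‖b k‖ * r^k) ∧
      ∑' k : ℕ, ‖b k‖ * r^k ≤ Metric.infDist 0 (frontier (f '' ball 0 1)) := by
  have hr1 : r < 1 := by linarith
  have hsum : Summable (fun k => ‖b k‖ * r ^ k) := by
    have := (hrep r (by simpa [abs_of_nonneg hr] using hr1)).summable.norm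
    simpa [norm_mul, norm_pow, abs_of_nonneg hr] using this
  refine ⟨hsum, ?_⟩
  rcases eq_or_lt_of_le hr with h | hrpos
  · have : ∑' k : ℕ, ‖b k‖ * r^k = 0 := by
      rw [← h]
      convert tsum_zero with k
      rcases k with _ | k
      · simp [hb0]
      · simp
    rw [this]; exact infDist_nonneg
  obtain ⟨h, hd, h0, hfe, hlog⟩ := star_log hf f0 f1 hne
  have hre : ∀ z ∈ ball (0:ℂ) 1, α < (1 + z * deriv h z).re := by
    intro z hz
    by_cases hz0 : z = 0
    · simp [hz0]; linarith
    · rw [← hlog z hz hz0]; exact hst z hz hz0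
  have hinj : InjOn f (ball 0 1) := (starlike_inj hα0 hd hre).congr (fun z hz => (hfe z hz).symm)
  have hdne : ∀ z ∈ ball (0:ℂ) 1, deriv f z ≠ 0 := by
    intro z hz hz'
    by_cases hz0 : z = 0
    · rw [hz0, f1] at hz'; exact one_ne_zero hz'
    · have := hst z hz hz0
      rw [hz'] at this
      simp at this; linarith
  have hopen := open_image hf hinj _ subset_rfl isOpen_ball
  have hnon : (frontier (f '' ball 0 1)).Nonempty := by
    rw [nonempty_frontier_iff]
    exact ⟨⟨f 0, 0, by simp, rfl⟩, image_ne_univ hf hinj hdne⟩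
  set s := 2 * (1 - α) with hs
  have hdist : Real.exp (-(s * Real.log 2)) ≤ infDist 0 (frontier (f '' ball 0 1)) := by
    rw [le_infDist hnon]
    intro w hw
    rw [dist_zero_left]
    have := frontier_bound hf hopen (m := fun t => t * Real.exp (-(s * Real.log (1 + t))))
      (by
        have : (1:ℝ) + 1 ≠ 0 := by norm_num
        fun_prop (disch := assumption)) (by
        intro z hz
        rw [hfe z hz, norm_mul, Complex.norm_exp]
        gcongr
        exact star_growth (by linarith) hd h0 hre hz) hw
    norm_num at this
    exact this
  refine le_trans ?_ hdist
  have hr3 : r ≤ 1/3 := hrr.trans (r_le_third (by rw [hs]; linarith) hr₀ hr₀1 heq)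
  have hMf : Maj f r (r * Real.exp (s * (-Real.log (1 - r)))) :=
    ((Maj.id.mul hr (maj_exp hr (maj_h hd h0 hre hr hr1)))).congr
      (fun z hz => hfe z (by simpa using hz.trans_lt hr1))
  have hMω := maj_schwarz hω ω0 hωm hr hr3
  obtain ⟨a, ha, haB, haf⟩ := hMf
  obtain ⟨c, hcs, hcB, hcg⟩ := ((hMω.comp hr a ha haf).mono haB).congr
      (fun z hz => hg z (by simpa using hz.trans_lt hr1))
  have hbc : b = c := ps_uniq hrpos (fun z hz => hrep z (by simpa using hz.trans hr1))
    (fun z hz => hcg z hz.le)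
  rw [hbc]
  refine hcB.trans ?_
  have hspos : 0 < s := by rw [hs]; linarith
  have h1 : r * Real.exp (s * (-Real.log (1 - r))) ≤ r₀ * Real.exp (s * (-Real.log (1 - r₀))) := by
    have : Real.log (1 - r₀) ≤ Real.log (1 - r) := Real.log_le_log (by linarith) (by linarith)
    gcongr
  refine h1.trans_eq ?_
  rw [Real.rpow_def_of_pos (by linarith), Real.rpow_def_of_pos (by norm_num)] at heq
  have e1 : s * (-Real.log (1 - r₀)) = -(Real.log (1 - r₀) * s) := by ring
  have e2 : -(s * Real.log 2) = -(Real.log 2 * s) := by ring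
  rw [e1, e2, Real.exp_neg, Real.exp_neg, heq]
  field_simp
end

theorem stmt18 (α : ℝ) (hα0 : 0 ≤ α) (hα1 : α ≤ 1/2)
    (f g : ℂ → ℂ) (hf : StarlikeOrder α f)
    (hg : DifferentiableOn ℂ g 𝔻) (hg0 : g 0 = 0) (hsub : Subordinate g f)
    (b : ℕ → ℂ) (hb0 : b 0 = 0)
    (hrep : ∀ z ∈ 𝔻, HasSum (fun k => b k * z^k) (g z))
    (r₀ : ℝ) (hr₀ : 0 < r₀) (hr₀1 : r₀ < 1)
    (heq : (1 - r₀) ^ ((2*(1-α) : ℝ)) = 2 ^ ((2*(1-α) : ℝ)) * r₀) :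
    ∀ r : ℝ, 0 ≤ r → r ≤ r₀ →
      Summable (fun k : ℕ => ‖b k‖ * r^k) ∧
      ∑' k : ℕ, ‖b k‖ * r^k ≤ Metric.infDist 0 (frontier (f '' 𝔻)) := by
  obtain ⟨⟨hfd, f0, f1⟩, hne, hst⟩ := hf
  obtain ⟨ω, hω, ω0, hωm, hgω⟩ := hsub
  intro r hr hrr
  exact main_aux α hα0 hα1 f g ω hfd f0 f1 hne hst hω ω0 hωm hgω b hb0 hrep r₀ hr₀ hr₀1 heq r hr hrr
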